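/- arXiv:1111.6348 — 2 statements merged into one kernel-verified Lean document; each statement's English description precedes it below -/
import Mathlib

section
/- Let μ be a finite positive Borel measure on ℂ with compact infinite support, and let z ∈ ℂ with z ∉ ch(μ). Then for every n ∈ ℕ, |∫_ℂ |p_n(w;μ)|²/(z−w) dμ(w)| ≥ dist(z, ch(μ)) / sup_{w ∈ supp(μ)} |z−w|². In particular this lower bound is strictly positive and is bounded away from 0 uniformly for z in any compact subset of ℂ ∖ ch(μ). -/
/-!
Let `S` be the support of `μ`, `C` its convex hull, and `v` the point of the compact convex set `C`
nearest to `z ∉ C`, at distance `d > 0`. The variational inequality characterising `v` says that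
every `w ∈ C` satisfies `Re ((z - v) * conj (z - w)) ≥ d ^ 2`
(`exists_infDist_sq_le_re_mul_conj`), hence `Re ((z - v) / (z - w)) ≥ d ^ 2 / M` as soon as
`‖z - w‖ ^ 2 ≤ M` on `S`. Integrating against `‖p n‖ ^ 2 μ`, which is a probability measure carried
by `S`, gives `d * ‖∫ ‖p n‖ ^ 2 / (z - w)‖ ≥ d ^ 2 / M` (`infDist_div_le_norm_integral`).
The pointwise bound takes `M` to be the supremum; the bound uniform on a compact `K` takes an `M`
valid for all of `K × S` and the minimum of the distance to `C` over `K`.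
-/

open MeasureTheory Filter Topology Polynomial

noncomputable section

/-- The closed support of a measure: the set of points all of whose neighborhoods
have positive measure. -/
def measSupport {α : Type*} [TopologicalSpace α] [MeasurableSpace α] (μ : Measure α) : Set α :=
  {x | ∀ U ∈ nhds x, μ U ≠ 0}

/-- `p` is the sequence of orthonormal polynomials for `μ`, with positive real leading
coefficients `κ`. -/
def OrthonormalPolys (μ : Measure ℂ) (p : ℕ → Polynomial ℂ) (κ : ℕ → ℝ) : Prop :=
  (∀ n, (p n).degree = n) ∧ (∀ n, 0 < κ n) ∧ (∀ n, (p n).leadingCoeff = (κ n : ℂ)) ∧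
  (∀ n m, ∫ z, (starRingEnd ℂ) ((p n).eval z) * (p m).eval z ∂μ
      = if n = m then 1 else 0)

/-- The measure is carried by its support, because `ℂ` is second countable. -/
lemma ae_mem_measSupport (μ : Measure ℂ) : ∀ᵐ w ∂μ, w ∈ measSupport μ := by
  have h : measSupport μ = μ.support := by
    ext x
    simp [measSupport, Measure.mem_support_iff_forall, pos_iff_ne_zero]
  rw [h]
  exact Measure.support_mem_ae

/-- In `ℂ` the convex hull of a compact set is compact: by Carathéodory's theorem it is the union,
over `k ≤ 3`, of the compact sets of convex combinations of `k` points. -/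
lemma isCompact_convexHull_complex {S : Set ℂ} (hS : IsCompact S) :
    IsCompact (convexHull ℝ S) := by
  have h : convexHull ℝ S = ⋃ k ∈ Set.Iic 3,
      (fun x : (Fin k → ℝ) × (Fin k → ℂ) => ∑ i, x.1 i • x.2 i) ''
        (stdSimplex ℝ (Fin k) ×ˢ Set.univ.pi fun _ => S) := by
    apply Set.Subset.antisymm
    · intro x hx
      obtain ⟨ι, hι, y, a, hyS, hind, ha, hsum, hx⟩ := eq_pos_convex_span_of_mem_convexHull hx
      have hcard : Fintype.card ι ≤ 3 := by
        have h1 := hind.card_le_finrank_succ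
        have h2 : Module.finrank ℝ (vectorSpan ℝ (Set.range y)) ≤ Module.finrank ℝ ℂ :=
          Submodule.finrank_le _
        rw [Complex.finrank_real_complex] at h2
        omega
      let e := (Fintype.equivFin ι).symm
      refine Set.mem_biUnion (Set.mem_Iic.2 hcard)
        ⟨(a ∘ e, y ∘ e), ⟨⟨fun i => (ha _).le, ?_⟩, fun i _ => hyS ⟨_, rfl⟩⟩, ?_⟩
      · exact (Equiv.sum_comp e a).trans hsum
      · exact (Equiv.sum_comp e fun i => a i • y i).trans hx
    · refine Set.iUnion₂_subset fun k _ => ?_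
      rintro _ ⟨⟨a, y⟩, ⟨⟨ha, hsum⟩, hy⟩, rfl⟩
      exact (convex_convexHull ℝ S).sum_mem (fun i _ => ha i) hsum
        fun i _ => subset_convexHull ℝ S (hy i trivial)
  rw [h]
  refine (Set.finite_Iic 3).isCompact_biUnion fun k _ => ?_
  exact ((isCompact_stdSimplex ℝ (Fin k)).prod (isCompact_univ_pi fun _ => hS)).image (by fun_prop)

/-- The nearest-point projection `v` of `z` onto a closed convex set, with its variational
inequality written in terms of complex multiplication. -/
lemma exists_infDist_sq_le_re_mul_conj {C : Set ℂ} (hne : C.Nonempty) (hcl : IsClosed C)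
    (hconv : Convex ℝ C) (z : ℂ) :
    ∃ v : ℂ, ‖z - v‖ = Metric.infDist z C ∧
      ∀ w ∈ C, Metric.infDist z C ^ 2 ≤ ((z - v) * (starRingEnd ℂ) (z - w)).re := by
  obtain ⟨v, hvC, hv⟩ := exists_norm_eq_iInf_of_complete_convex hne hcl.isComplete hconv z
  have hd : ‖z - v‖ = Metric.infDist z C := by
    rw [hv, Metric.infDist_eq_iInf]
    simp only [dist_eq_norm]
  refine ⟨v, hd, fun w hw => ?_⟩
  have h := (norm_eq_iInf_iff_real_inner_le_zero hconv hvC).1 hv w hw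
  rw [← hd, ← Complex.normSq_eq_norm_sq, Complex.normSq_apply]
  rw [Complex.inner] at h
  simp only [Complex.mul_re, Complex.conj_re, Complex.conj_im, Complex.sub_re,
    Complex.sub_im] at h ⊢
  nlinarith

/-- A continuous function is integrable for a finite measure with compact support. -/
lemma integrable_of_continuousOn_measSupport {μ : Measure ℂ} [IsFiniteMeasure μ]
    (hc : IsCompact (measSupport μ)) {f : ℂ → ℂ} (hf : ContinuousOn f (measSupport μ)) :
    Integrable f μ := by
  rw [← Measure.restrict_eq_self_of_ae_mem (ae_mem_measSupport μ)]
  exact hf.integrableOn_compact hc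

/-- The lower bound for an arbitrary upper bound `M` of `‖z - w‖ ^ 2` on the support. -/
lemma infDist_div_le_norm_integral {μ : Measure ℂ} [IsFiniteMeasure μ]
    (hc : IsCompact (measSupport μ)) (hne : (measSupport μ).Nonempty) {q : ℂ[X]}
    (hq : ∫ w, (starRingEnd ℂ) (q.eval w) * q.eval w ∂μ = 1) {z : ℂ}
    (hz : z ∉ convexHull ℝ (measSupport μ)) {M : ℝ}
    (hM : ∀ w ∈ measSupport μ, ‖z - w‖ ^ 2 ≤ M) :
    Metric.infDist z (convexHull ℝ (measSupport μ)) / M ≤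
      ‖∫ w, ((‖q.eval w‖ ^ 2 : ℝ) : ℂ) / (z - w) ∂μ‖ := by
  have hsub : measSupport μ ⊆ convexHull ℝ (measSupport μ) := subset_convexHull ℝ _
  have hcl : IsClosed (convexHull ℝ (measSupport μ)) := (isCompact_convexHull_complex hc).isClosed
  have hd := (hcl.notMem_iff_infDist_pos (hne.mono hsub)).1 hz
  obtain ⟨v, hv, hvw⟩ := exists_infDist_sq_le_re_mul_conj (hne.mono hsub) hcl
    (convex_convexHull ℝ _) z
  set d := Metric.infDist z (convexHull ℝ (measSupport μ))
  have hzw : ∀ w ∈ measSupport μ, z - w ≠ 0 := fun w hw h =>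
    hz (sub_eq_zero.1 h ▸ hsub hw)
  have hqc : Continuous fun w => q.eval w := q.continuous
  have hint : Integrable (fun w => ((‖q.eval w‖ ^ 2 : ℝ) : ℂ) / (z - w)) μ := by
    refine integrable_of_continuousOn_measSupport hc (ContinuousOn.div ?_ ?_ hzw)
    · exact Continuous.continuousOn (by fun_prop)
    · exact Continuous.continuousOn (by fun_prop)
  have hqq : ∀ w, (starRingEnd ℂ) (q.eval w) * q.eval w = ((‖q.eval w‖ ^ 2 : ℝ) : ℂ) := by
    intro w
    rw [mul_comm, Complex.mul_conj, Complex.normSq_eq_norm_sq]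
  have hone : ∫ w, ‖q.eval w‖ ^ 2 ∂μ = 1 := by
    simp only [hqq] at hq
    rw [integral_complex_ofReal] at hq
    exact_mod_cast hq
  have hintq : Integrable (fun w => ‖q.eval w‖ ^ 2) μ := by
    by_contra h
    rw [integral_undef h] at hone
    exact zero_ne_one hone
  have hpt : ∀ w ∈ measSupport μ, d ^ 2 / M * ‖q.eval w‖ ^ 2 ≤
      ((z - v) * (((‖q.eval w‖ ^ 2 : ℝ) : ℂ) / (z - w))).re := by
    intro w hw
    have hpos : 0 < ‖z - w‖ ^ 2 := by
      have := norm_pos_iff.2 (hzw w hw)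
      positivity
    have hre : ((z - v) * (((‖q.eval w‖ ^ 2 : ℝ) : ℂ) / (z - w))).re =
        ((z - v) * (starRingEnd ℂ) (z - w)).re / ‖z - w‖ ^ 2 * ‖q.eval w‖ ^ 2 := by
      rw [← Complex.normSq_eq_norm_sq (z - w), div_eq_mul_inv _ (z - w), Complex.inv_def,
        show ∀ a b c e : ℂ, a * (b * (c * e)) = a * c * e * b by intros; ring,
        Complex.re_mul_ofReal, Complex.re_mul_ofReal, div_eq_mul_inv]
    rw [hre]
    gcongr
    · exact (sq_nonneg d).trans (hvw w (hsub hw))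
    · exact hvw w (hsub hw)
    · exact hM w hw
  have hmain : d ^ 2 / M ≤ d * ‖∫ w, ((‖q.eval w‖ ^ 2 : ℝ) : ℂ) / (z - w) ∂μ‖ := by
    calc d ^ 2 / M = ∫ w, d ^ 2 / M * ‖q.eval w‖ ^ 2 ∂μ := by
          rw [integral_const_mul, hone, mul_one]
      _ ≤ ∫ w, ((z - v) * (((‖q.eval w‖ ^ 2 : ℝ) : ℂ) / (z - w))).re ∂μ := by
          refine integral_mono_ae (hintq.const_mul _) (hint.const_mul (z - v)).re ?_
          filter_upwards [ae_mem_measSupport μ] with w hw using hpt w hw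
      _ = ((z - v) * ∫ w, ((‖q.eval w‖ ^ 2 : ℝ) : ℂ) / (z - w) ∂μ).re := by
          rw [← integral_const_mul]
          exact integral_re (hint.const_mul (z - v))
      _ ≤ _ := (Complex.re_le_norm _).trans (by rw [norm_mul, hv])
  refine le_of_mul_le_mul_left ?_ hd
  calc d * (d / M) = d ^ 2 / M := by ring
    _ ≤ _ := hmain

theorem lower_bound_for_cauchy_transform_of_pn_squared
    (μ : Measure ℂ) [IsFiniteMeasure μ]
    (hc : IsCompact (measSupport μ)) (hi : (measSupport μ).Infinite)
    (p : ℕ → Polynomial ℂ) (κ : ℕ → ℝ) (hON : OrthonormalPolys μ p κ) :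
    (∀ z ∉ convexHull ℝ (measSupport μ), ∀ n : ℕ,
      0 < Metric.infDist z (convexHull ℝ (measSupport μ)) /
          sSup ((fun w => ‖z - w‖ ^ 2) '' measSupport μ) ∧
      Metric.infDist z (convexHull ℝ (measSupport μ)) /
          sSup ((fun w => ‖z - w‖ ^ 2) '' measSupport μ) ≤
        ‖∫ w, ((‖(p n).eval w‖ ^ 2 : ℝ) : ℂ) / (z - w) ∂μ‖) ∧
    (∀ K : Set ℂ, IsCompact K → K ⊆ (convexHull ℝ (measSupport μ))ᶜ →
      ∃ A > 0, ∀ z ∈ K, ∀ n : ℕ,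
        A ≤ ‖∫ w, ((‖(p n).eval w‖ ^ 2 : ℝ) : ℂ) / (z - w) ∂μ‖) := by
  have hne := hi.nonempty
  have hsub : measSupport μ ⊆ convexHull ℝ (measSupport μ) := subset_convexHull ℝ _
  have hcl : IsClosed (convexHull ℝ (measSupport μ)) := (isCompact_convexHull_complex hc).isClosed
  have hpos : ∀ z ∉ convexHull ℝ (measSupport μ),
      0 < Metric.infDist z (convexHull ℝ (measSupport μ)) := fun z hz =>
    (hcl.notMem_iff_infDist_pos (hne.mono hsub)).1 hz
  have hone : ∀ n, ∫ w, (starRingEnd ℂ) ((p n).eval w) * (p n).eval w ∂μ = 1 := fun n => by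
    simpa using hON.2.2.2 n n
  constructor
  · intro z hz n
    have hM : ∀ w ∈ measSupport μ,
        ‖z - w‖ ^ 2 ≤ sSup ((fun w => ‖z - w‖ ^ 2) '' measSupport μ) := fun w hw =>
      le_csSup (hc.bddAbove_image (Continuous.continuousOn (by fun_prop)))
        (Set.mem_image_of_mem _ hw)
    refine ⟨div_pos (hpos z hz) ?_, infDist_div_le_norm_integral hc hne (hone n) hz hM⟩
    obtain ⟨w, hw⟩ := hne
    have hzw : 0 < ‖z - w‖ := norm_pos_iff.2 fun h => hz (sub_eq_zero.1 h ▸ hsub hw)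
    exact lt_of_lt_of_le (by positivity) (hM w hw)
  · intro K hK hKC
    rcases K.eq_empty_or_nonempty with rfl | hKne
    · exact ⟨1, one_pos, by simp⟩
    obtain ⟨z₀, hz₀, hmin⟩ := hK.exists_isMinOn hKne
      (Metric.continuous_infDist_pt (convexHull ℝ (measSupport μ))).continuousOn
    obtain ⟨R, hR⟩ := (hK.prod hc).bddAbove_image
      (f := fun x : ℂ × ℂ => ‖x.1 - x.2‖ ^ 2) (Continuous.continuousOn (by fun_prop))
    have hM : ∀ z ∈ K, ∀ w ∈ measSupport μ, ‖z - w‖ ^ 2 ≤ R := fun z hz w hw =>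
      hR (Set.mem_image_of_mem (fun x : ℂ × ℂ => ‖x.1 - x.2‖ ^ 2) (Set.mk_mem_prod hz hw))
    have hRpos : 0 < R := by
      obtain ⟨w, hw⟩ := hne
      have hzw : 0 < ‖z₀ - w‖ :=
        norm_pos_iff.2 fun h => hKC hz₀ (sub_eq_zero.1 h ▸ hsub hw)
      exact lt_of_lt_of_le (by positivity) (hM z₀ hz₀ w hw)
    refine ⟨_, div_pos (hpos z₀ (hKC hz₀)) hRpos, fun z hz n => ?_⟩
    refine le_trans ?_ (infDist_div_le_norm_integral hc hne (hone n) (hKC hz) (hM z hz))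
    exact div_le_div_of_nonneg_right (hmin hz) hRpos.le
end
end

section
/- Let 𝒩 ⊆ ℕ be a set of asymptotic density 1. Then there exists a set 𝒩₁ ⊆ 𝒩 of asymptotic density 1 with the following property: for every ℓ ∈ ℕ there is N ∈ ℕ such that for all m ∈ 𝒩₁ with m ≥ N, the entire block {m−ℓ, m−ℓ+1, …, m+ℓ} is contained in 𝒩. -/
/-!
For each radius `ℓ` let `blockCore 𝒩 ℓ` be the set of centres `m` whose block `[m - ℓ, m + ℓ]` lies
in `𝒩`. If `m` is not in `blockCore 𝒩 (ℓ + 1)`, then one of `m - 1`, `m`, `m + 1` is not in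
`blockCore 𝒩 ℓ`, so the number of missing elements up to `n` grows at most from `c` to `3 * c + 2`
(`gapCount_blockCore_succ`). Hence every `blockCore 𝒩 ℓ` has density one. These sets decrease with
`ℓ`, and a diagonal argument (`exists_hasDensityOne_diagonal`) produces a single set of density one
that is eventually contained in each of them.
-/

open Filter Topology

noncomputable section

/-- A set of natural numbers has asymptotic density one. -/
def hasDensityOne (S : Set ℕ) : Prop :=
  Filter.Tendsto (fun n : ℕ => (Nat.card ↥(S ∩ Set.Icc 1 n) : ℝ) / n) Filter.atTop (nhds 1)

open Classical in
/-- The number of elements of `{1, …, n}` missing from `S`. -/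
def gapCount (S : Set ℕ) (n : ℕ) : ℕ := ((Finset.Icc 1 n).filter (· ∉ S)).card

/-- The centres `m` whose block of radius `ℓ`, truncated at `0`, is contained in `S`. -/
def blockCore (S : Set ℕ) (ℓ : ℕ) : Set ℕ := {m | Set.Icc (m - ℓ) (m + ℓ) ⊆ S}

lemma card_add_gapCount (S : Set ℕ) (n : ℕ) :
    Nat.card ↥(S ∩ Set.Icc 1 n) + gapCount S n = n := by
  classical
  have h : S ∩ Set.Icc 1 n = ↑((Finset.Icc 1 n).filter (· ∈ S)) := by
    ext x; simp; tauto
  have h2 := Finset.card_filter_add_card_filter_not (s := Finset.Icc 1 n) (· ∈ S)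
  rw [h, Nat.card_coe_set_eq, Set.ncard_coe_finset, gapCount]
  simp only [Nat.card_Icc, Nat.add_sub_cancel] at h2
  convert h2

lemma hasDensityOne_iff_gapCount (S : Set ℕ) :
    hasDensityOne S ↔ Tendsto (fun n : ℕ => (gapCount S n : ℝ) / n) atTop (𝓝 0) := by
  have key : ∀ᶠ n : ℕ in atTop,
      (Nat.card ↥(S ∩ Set.Icc 1 n) : ℝ) / n = 1 - (gapCount S n : ℝ) / n := by
    filter_upwards [eventually_gt_atTop 0] with n hn
    have h : (Nat.card ↥(S ∩ Set.Icc 1 n) : ℝ) + gapCount S n = n := by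
      exact_mod_cast card_add_gapCount S n
    have hn' : (n : ℝ) ≠ 0 := by positivity
    rw [eq_sub_iff_add_eq, ← add_div, h, div_self hn']
  unfold hasDensityOne
  rw [tendsto_congr' key]
  constructor
  · intro h
    simpa using h.const_sub 1
  · intro h
    simpa using h.const_sub 1

lemma blockCore_zero (S : Set ℕ) : blockCore S 0 = S := by
  ext m; simp [blockCore]

lemma blockCore_antitone (S : Set ℕ) : Antitone (blockCore S) := by
  intro a b hab m hm
  exact (Set.Icc_subset_Icc (by omega) (by omega)).trans hm

/-- A block of radius `ℓ + 1` is covered by the three blocks of radius `ℓ` around the centre and its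
two neighbours. -/
lemma mem_blockCore_succ {S : Set ℕ} {ℓ m : ℕ} (h₁ : m - 1 ∈ blockCore S ℓ)
    (h₂ : m ∈ blockCore S ℓ) (h₃ : m + 1 ∈ blockCore S ℓ) : m ∈ blockCore S (ℓ + 1) := by
  rintro j ⟨hj, hj'⟩
  rcases lt_trichotomy j m with h | h | h
  · exact h₁ ⟨by omega, by omega⟩
  · exact h₂ ⟨by omega, by omega⟩
  · exact h₃ ⟨by omega, by omega⟩

/-- The two extra elements come from the ends: the neighbours `0` of `1` and `n + 1` of `n` lie
outside `{1, …, n}`. -/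
lemma gapCount_blockCore_succ (S : Set ℕ) (ℓ n : ℕ) :
    gapCount (blockCore S (ℓ + 1)) n ≤ 3 * gapCount (blockCore S ℓ) n + 2 := by
  classical
  set G := (Finset.Icc 1 n).filter (· ∉ blockCore S ℓ) with hG
  have hc : gapCount (blockCore S ℓ) n = G.card := by simp only [gapCount, hG]
  have hsub : (Finset.Icc 1 n).filter (· ∉ blockCore S (ℓ + 1)) ⊆
      G ∪ (G.image (· + 1) ∪ (G.image (· - 1) ∪ {1, n})) := by
    intro m hm
    simp only [Finset.mem_filter, Finset.mem_Icc] at hm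
    obtain ⟨⟨h1, hn⟩, hm⟩ := hm
    simp only [Finset.mem_union, Finset.mem_image, Finset.mem_insert, Finset.mem_singleton, hG,
      Finset.mem_filter, Finset.mem_Icc]
    by_cases h₂ : m ∈ blockCore S ℓ
    · by_cases h₁ : m - 1 ∈ blockCore S ℓ
      · have h₃ : m + 1 ∉ blockCore S ℓ := fun h₃ => hm (mem_blockCore_succ h₁ h₂ h₃)
        by_cases hmn : m = n
        · simp [hmn]
        · exact .inr (.inr (.inl ⟨m + 1, ⟨⟨by omega, by omega⟩, h₃⟩, by omega⟩))
      · by_cases hm1 : m = 1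
        · simp [hm1]
        · exact .inr (.inl ⟨m - 1, ⟨⟨by omega, by omega⟩, h₁⟩, by omega⟩)
    · exact .inl ⟨⟨h1, hn⟩, h₂⟩
  have h0 : gapCount (blockCore S (ℓ + 1)) n ≤
      (G ∪ (G.image (· + 1) ∪ (G.image (· - 1) ∪ {1, n}))).card := by
    unfold gapCount
    convert Finset.card_le_card hsub
  have e1 := Finset.card_union_le G (G.image (· + 1) ∪ (G.image (· - 1) ∪ {1, n}))
  have e2 := Finset.card_union_le (G.image (· + 1)) (G.image (· - 1) ∪ {1, n})
  have e3 := Finset.card_union_le (G.image (· - 1)) {1, n}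
  have e4 := Finset.card_image_le (s := G) (f := (· + 1))
  have e5 := Finset.card_image_le (s := G) (f := (· - 1))
  have e6 := Finset.card_le_two (a := 1) (b := n)
  omega

lemma hasDensityOne_blockCore {S : Set ℕ} (hS : hasDensityOne S) (ℓ : ℕ) :
    hasDensityOne (blockCore S ℓ) := by
  induction ℓ with
  | zero => rwa [blockCore_zero]
  | succ ℓ ih =>
    rw [hasDensityOne_iff_gapCount] at ih ⊢
    have hlim : Tendsto (fun n : ℕ => 3 * ((gapCount (blockCore S ℓ) n : ℝ) / n) + 2 / (n : ℝ))
        atTop (𝓝 0) := by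
      simpa using (ih.const_mul 3).add (tendsto_const_div_atTop_nhds_zero_nat (2 : ℝ))
    refine squeeze_zero (fun n => by positivity) (fun n => ?_) hlim
    have h : (gapCount (blockCore S (ℓ + 1)) n : ℝ) ≤ 3 * gapCount (blockCore S ℓ) n + 2 := by
      exact_mod_cast gapCount_blockCore_succ S ℓ n
    rw [← mul_div_assoc, ← add_div]
    gcongr

/-- A decreasing sequence of sets of density one has a pseudo-intersection of density one.
The thresholds `φ ℓ` are chosen so that `S ℓ` misses a proportion at most `1 / (ℓ + 1)` of
`{1, …, n}` whenever `n ≥ φ ℓ`, and `T` is required to lie in `S ℓ` only from `φ ℓ` on. -/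
lemma exists_hasDensityOne_diagonal {S : ℕ → Set ℕ} (hanti : Antitone S)
    (hS : ∀ ℓ, hasDensityOne (S ℓ)) :
    ∃ T ⊆ S 0, hasDensityOne T ∧ ∀ ℓ, ∃ N, ∀ m ∈ T, N ≤ m → m ∈ S ℓ := by
  classical
  have hev : ∀ ℓ : ℕ, ∀ᶠ k : ℕ in atTop, ∀ n ≥ k, (gapCount (S ℓ) n : ℝ) / n ≤ 1 / (ℓ + 1) := by
    intro ℓ
    have h := (hasDensityOne_iff_gapCount _).1 (hS ℓ)
    have hpos : (0 : ℝ) < 1 / (ℓ + 1) := by positivity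
    exact eventually_forall_ge_atTop.2 (h.eventually_le_const hpos)
  obtain ⟨φ, hφ, hgap⟩ := extraction_forall_of_eventually hev
  refine ⟨{m | m ∈ S 0 ∧ ∀ ℓ, φ ℓ ≤ m → m ∈ S ℓ}, fun m hm => hm.1, ?_,
    fun ℓ => ⟨φ ℓ, fun m hm h => hm.2 ℓ h⟩⟩
  rw [hasDensityOne_iff_gapCount, Metric.tendsto_atTop]
  intro ε hε
  obtain ⟨L, hL⟩ := exists_nat_one_div_lt hε
  refine ⟨φ L, fun n hn => ?_⟩
  -- `k` is the last index whose threshold is at most `n`, so no later condition affects `[1, n]`.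
  obtain ⟨k, hLk, hk, hk'⟩ : ∃ k, L ≤ k ∧ φ k ≤ n ∧ ∀ ℓ, φ ℓ ≤ n → ℓ ≤ k := by
    have hb : ∀ ℓ, φ ℓ ≤ n → ℓ ≤ n := fun ℓ h => hφ.le_apply.trans h
    exact ⟨Nat.findGreatest (φ · ≤ n) n, Nat.le_findGreatest (hb L hn) hn,
      Nat.findGreatest_spec (P := (φ · ≤ n)) (hb L hn) hn,
      fun ℓ h => Nat.le_findGreatest (hb ℓ h) h⟩
  have hle : gapCount {m | m ∈ S 0 ∧ ∀ ℓ, φ ℓ ≤ m → m ∈ S ℓ} n ≤ gapCount (S k) n := by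
    refine Finset.card_le_card fun m hm => ?_
    simp only [Finset.mem_filter, Finset.mem_Icc] at hm ⊢
    refine ⟨hm.1, fun hmk => hm.2 ⟨hanti (Nat.zero_le k) hmk, fun ℓ hℓ => ?_⟩⟩
    exact hanti (hk' ℓ (hℓ.trans hm.1.2)) hmk
  rw [Real.dist_eq, sub_zero, abs_of_nonneg (by positivity)]
  calc _ ≤ (gapCount (S k) n : ℝ) / n := by gcongr
    _ ≤ 1 / (k + 1) := hgap k n hk
    _ ≤ 1 / (L + 1) := by gcongr
    _ < ε := hL

theorem density_one_subsequence_with_shift_property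
    (𝒩 : Set ℕ) (h𝒩 : hasDensityOne 𝒩) :
    ∃ 𝒩₁ : Set ℕ, 𝒩₁ ⊆ 𝒩 ∧ hasDensityOne 𝒩₁ ∧
      ∀ ℓ : ℕ, ∃ N : ℕ, ∀ m ∈ 𝒩₁, N ≤ m → Set.Icc (m - ℓ) (m + ℓ) ⊆ 𝒩 := by
  obtain ⟨T, hT, hT1, hT2⟩ :=
    exists_hasDensityOne_diagonal (blockCore_antitone 𝒩) (hasDensityOne_blockCore h𝒩)
  rw [blockCore_zero] at hT
  exact ⟨T, hT, hT1, hT2⟩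
end
end
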